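/- arXiv:1710.02629 — 2 statements merged into one kernel-verified Lean document; each statement's English description precedes it below -/
import Mathlib

section
/- Let ξ be the permutation of P¹(F₃₁) given by ν ↦ −1/ν (with the conventions −1/0 = ∞ and −1/∞ = 0). Define x = (x_ν) ∈ ((ℤ/35ℤ)ˣ)^{P¹(F₃₁)} by x_∞ = 1, x_0 = −1, x_ν = −6 if ν is a nonzero square in F₃₁ (i.e., ν ∈ {3^{2k} : 0 ≤ k ≤ 14}), and x_ν = 6 if ν is a nonsquare in F₃₁ (i.e., ν ∈ {3^{2k+1} : 0 ≤ k ≤ 14}). Then the map on (ℤ/35ℤ)^{P¹(F₃₁)} given by the composition of the coordinate permutation induced by ξ followed by componentwise multiplication by x maps the code Q onto itself. -/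
/-!
Let `T` be the monomial map `w ↦ (ν ↦ x_ν · w(ξ ν))`. It suffices that `T` maps `Q` into itself,
because `T ∘ T = -1` (`T_T`): for `ν ≠ 0, ∞` one has `x_ν x_{ξ ν} = -36 = -1`, since `-1` is
a nonsquare modulo `31`.

Let `S = ∑ μ, v_μ`, which has the value `11` at every finite place and `27` at `∞` (`S_some`, `S_none`).
The images of the generators are explicit combinations of codewords:
* `T v_0 = 8 S + 15 v_0` (`T_vgen_zero`);
* `T v_μ = 15 v_0 + 6 v_{-1/μ}` if `μ` is a nonzero square (`T_vgen_of_isSquare`);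
* `T v_μ = 15 S + 15 v_0 - 6 v_{-1/μ}` if `μ` is a nonsquare (`T_vgen_of_not_isSquare`).

At a finite place `ν ≠ 0` both sides depend only on `χ(μ)`, `χ(ν)` and `χ(μν + 1)`, because
`μ - (-1/ν) = (μν + 1)/ν`, `-1/μ - ν = -(μν + 1)/μ` and `χ(-1) = -1`. The value `χ(μν + 1) = 0`
occurs only when `μν = -1`, and then `χ(μ) χ(ν) = -1`. The identities are thereby reduced to
finitely many numerical equalities in `ℤ/35ℤ`.
-/

noncomputable section

/-- The projective line over `F₃₁`: `none` is the point `∞`. -/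
abbrev P1 : Type := Option (ZMod 31)

/-- The generator `v_μ` of the generalized quadratic residue code `Q` with
parameters `(a,b,d,s,t,e) = (0,0,1,7,3,2)`:
`v_μ(μ) = 1`, `v_μ(ν) = 7` if `χ(μ-ν) = 1`, `v_μ(ν) = 3` if `χ(μ-ν) = -1`, `v_μ(∞) = 2`. -/
def vgen (μ : ZMod 31) : P1 → ZMod 35 := fun ν =>
  match ν with
  | none => 2
  | some ν' => if ν' = μ then 1 else if IsSquare (μ - ν') then 7 else 3

/-- The generalized quadratic residue code `Q`, a subgroup of `(ℤ/35ℤ)^{P¹(F₃₁)}`. -/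
def Qcode : AddSubgroup (P1 → ZMod 35) := AddSubgroup.closure (Set.range vgen)

/-- The permutation `ξ : ν ↦ -1/ν` of `P¹(F₃₁)` (with `-1/0 = ∞` and `-1/∞ = 0`);
it is an involution, so `ξ⁻¹ = ξ`. -/
def xiPerm : P1 → P1 := fun ν =>
  match ν with
  | none => some 0
  | some μ => if μ = 0 then none else some (-μ⁻¹)

/-- The tuple `x` with `x_∞ = 1`, `x_0 = -1`, `x_ν = -6` for `ν` a nonzero square of `F₃₁`,
and `x_ν = 6` for `ν` a nonsquare of `F₃₁`. -/
def xComp : P1 → ZMod 35 := fun ν =>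
  match ν with
  | none => 1
  | some μ => if μ = 0 then -1 else if IsSquare μ then -6 else 6

instance fact_prime_31 : Fact (Nat.Prime 31) := ⟨by norm_num⟩

/-- The Legendre character `χ` of `F₃₁`, extended by `χ(0) = 0`. -/
abbrev chi : MulChar (ZMod 31) ℤ := quadraticChar (ZMod 31)

/-- The coordinate of `v_μ` at `ν` as a function of `χ(μ - ν)`: the values at `0`, `1`, `-1`
are `d = 1`, `s = 7`, `t = 3`. -/
def entry (c : ℤ) : ZMod 35 := if c = 0 then 1 else if c = 1 then 7 else 3

lemma vgen_some (μ ν : ZMod 31) : vgen μ (some ν) = entry (chi (μ - ν)) := by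
  by_cases h : ν = μ
  · simp [vgen, entry, h]
  · have h' : μ - ν ≠ 0 := sub_ne_zero.mpr (Ne.symm h)
    by_cases hs : IsSquare (μ - ν) <;>
      simp [vgen, entry, h, hs, h', quadraticChar_apply, quadraticCharFun]

lemma xComp_some {ν : ZMod 31} (hν : ν ≠ 0) : xComp (some ν) = ((-6 * chi ν : ℤ) : ZMod 35) := by
  by_cases hs : IsSquare ν <;> simp [xComp, hν, hs, quadraticChar_apply, quadraticCharFun]

lemma chi_zero : chi 0 = 0 := quadraticChar_zero

lemma chi_neg_one : chi (-1) = -1 := by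
  rw [quadraticChar_neg_one (by simp [ZMod.ringChar_zmod_n])]
  simp only [ZMod.card]
  decide

lemma chi_neg (a : ZMod 31) : chi (-a) = -chi a := by
  rw [← neg_one_mul, map_mul, chi_neg_one, neg_one_mul]

lemma chi_inv (a : ZMod 31) : chi a⁻¹ = chi a := by
  by_cases h : a = 0
  · simp [h]
  · have h1 : chi a * chi a⁻¹ = 1 := by rw [← map_mul, mul_inv_cancel₀ h, map_one]
    rcases quadraticChar_dichotomy h with h2 | h2 <;> rw [h2] at h1 ⊢ <;> omega

/-- The additive map `w ↦ (ν ↦ x_ν · w(ξ ν))`. -/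
def T : (P1 → ZMod 35) →+ (P1 → ZMod 35) where
  toFun w := fun ν => xComp ν * w (xiPerm ν)
  map_zero' := by ext; simp
  map_add' u w := by ext; simp [mul_add]

lemma T_apply (w : P1 → ZMod 35) (ν : P1) : T w ν = xComp ν * w (xiPerm ν) := rfl

lemma xComp_zero : xComp (some 0) = -1 := by simp [xComp]

lemma xiPerm_some {ν : ZMod 31} (hν : ν ≠ 0) : xiPerm (some ν) = some (-ν⁻¹) := by
  simp [xiPerm, hν]

lemma xiPerm_zero : xiPerm (some 0) = none := by simp [xiPerm]

lemma xiPerm_xiPerm (ν : P1) : xiPerm (xiPerm ν) = ν := by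
  rcases ν with _ | ν
  · exact xiPerm_zero
  · by_cases h : ν = 0
    · subst h; rw [xiPerm_zero]; rfl
    · rw [xiPerm_some h, xiPerm_some (by simpa using h)]; simp [inv_neg]

lemma xComp_mul_xComp_xiPerm (ν : P1) : xComp ν * xComp (xiPerm ν) = -1 := by
  rcases ν with _ | ν
  · change 1 * xComp (some 0) = -1
    rw [xComp_zero, one_mul]
  · by_cases h : ν = 0
    · subst h; rw [xiPerm_zero, xComp_zero]; exact mul_one _
    · rw [xiPerm_some h, xComp_some h, xComp_some (by simpa using h), chi_neg, chi_inv]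
      rcases quadraticChar_dichotomy h with h2 | h2 <;> rw [h2] <;> decide

lemma T_T (w : P1 → ZMod 35) : T (T w) = -w := by
  ext ν
  rw [T_apply, T_apply, xiPerm_xiPerm, ← mul_assoc, xComp_mul_xComp_xiPerm]
  simp

/-- The sum of all generators of `Q`. -/
def S : P1 → ZMod 35 := ∑ μ, vgen μ

lemma sum_entry : ∑ μ : ZMod 31, entry (chi μ) = 11 := by
  simp only [quadraticChar_apply, quadraticCharFun]
  decide

/-- The value of `S` at a finite place does not depend on the place, by translation invariance
of the sum over `F₃₁`. -/
lemma S_some (ν : ZMod 31) : S (some ν) = 11 := by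
  simp only [S, Finset.sum_apply, vgen_some]
  rw [← sum_entry]
  exact (Equiv.subRight ν).sum_comp (fun μ => entry (chi μ))

lemma S_none : S none = 27 := by
  simp only [S, Finset.sum_apply, vgen, Finset.sum_const, Finset.card_univ, ZMod.card]
  decide

lemma T_none (μ : ZMod 31) : T (vgen μ) none = entry (chi μ) := by
  rw [T_apply]
  change 1 * vgen μ (some 0) = _
  rw [vgen_some, sub_zero, one_mul]

lemma T_zero (μ : ZMod 31) : T (vgen μ) (some 0) = -2 := by
  rw [T_apply, xiPerm_zero, xComp_zero]
  exact neg_one_mul _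

lemma T_some (μ : ZMod 31) {ν : ZMod 31} (hν : ν ≠ 0) :
    T (vgen μ) (some ν) = ((-6 * chi ν : ℤ) : ZMod 35) * entry (chi ν * chi (μ * ν + 1)) := by
  rw [T_apply, xiPerm_some hν, xComp_some hν, vgen_some, ← chi_inv ν, ← map_mul]
  congr 3
  field_simp
  ring_nf

lemma vgen_xi {μ : ZMod 31} (hμ : μ ≠ 0) (ν : ZMod 31) :
    vgen (-μ⁻¹) (some ν) = entry (-(chi μ * chi (μ * ν + 1))) := by
  rw [vgen_some, ← chi_inv μ, ← map_mul, ← chi_neg]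
  congr 2
  field_simp
  ring

lemma vgen_zero_some (ν : ZMod 31) : vgen 0 (some ν) = entry (-chi ν) := by
  rw [vgen_some, zero_sub, chi_neg]

/-- The possible values of `χ(μν + 1)`: it vanishes only for `μν = -1`, a nonsquare. -/
lemma chi_mul_add_one (μ ν : ZMod 31) :
    (chi (μ * ν + 1) = 0 ∧ chi μ * chi ν = -1) ∨ chi (μ * ν + 1) = 1 ∨ chi (μ * ν + 1) = -1 := by
  by_cases h : μ * ν + 1 = 0
  · left
    rw [← map_mul, eq_neg_of_add_eq_zero_left h, chi_neg_one, neg_add_cancel]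
    exact ⟨chi_zero, rfl⟩
  · exact Or.inr (quadraticChar_dichotomy h)

lemma T_vgen_zero : T (vgen 0) = 8 • S + 15 • vgen 0 := by
  ext ν
  simp only [Pi.add_apply, Pi.smul_apply]
  rcases ν with _ | ν
  · rw [T_none, S_none, chi_zero]
    decide
  · rw [S_some, vgen_zero_some]
    by_cases hν : ν = 0
    · subst hν
      rw [T_zero, chi_zero]
      decide
    · rw [T_some 0 hν, zero_mul, zero_add, map_one]
      rcases quadraticChar_dichotomy hν with h | h <;> rw [h] <;> decide

lemma T_vgen_of_isSquare {μ : ZMod 31} (hμ : chi μ = 1) :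
    T (vgen μ) = 15 • vgen 0 + 6 • vgen (-μ⁻¹) := by
  have hμ0 : μ ≠ 0 := by rintro rfl; simp at hμ
  ext ν
  simp only [Pi.add_apply, Pi.smul_apply]
  rcases ν with _ | ν
  · rw [T_none, hμ]
    change _ = 15 • (2 : ZMod 35) + 6 • (2 : ZMod 35)
    decide
  · rw [vgen_zero_some, vgen_xi hμ0]
    by_cases hν : ν = 0
    · subst hν
      rw [T_zero, chi_zero, mul_zero, zero_add, map_one, hμ]
      decide
    · rw [T_some μ hν]
      have h3 := chi_mul_add_one μ ν
      rw [hμ] at h3 ⊢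
      rcases quadraticChar_dichotomy hν with h | h <;> rw [h] at h3 ⊢ <;>
        rcases h3 with ⟨h3, h4⟩ | h3 | h3 <;> rw [h3] <;> first | decide | (revert h4; decide)

lemma T_vgen_of_not_isSquare {μ : ZMod 31} (hμ : chi μ = -1) :
    T (vgen μ) = 15 • S + 15 • vgen 0 - 6 • vgen (-μ⁻¹) := by
  have hμ0 : μ ≠ 0 := by rintro rfl; simp at hμ
  ext ν
  simp only [Pi.add_apply, Pi.sub_apply, Pi.smul_apply]
  rcases ν with _ | ν
  · rw [T_none, hμ, S_none]
    change _ = 15 • (27 : ZMod 35) + 15 • (2 : ZMod 35) - 6 • (2 : ZMod 35)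
    decide
  · rw [S_some, vgen_zero_some, vgen_xi hμ0]
    by_cases hν : ν = 0
    · subst hν
      rw [T_zero, chi_zero, mul_zero, zero_add, map_one, hμ]
      decide
    · rw [T_some μ hν]
      have h3 := chi_mul_add_one μ ν
      rw [hμ] at h3 ⊢
      rcases quadraticChar_dichotomy hν with h | h <;> rw [h] at h3 ⊢ <;>
        rcases h3 with ⟨h3, h4⟩ | h3 | h3 <;> rw [h3] <;> first | decide | (revert h4; decide)

lemma vgen_mem (μ : ZMod 31) : vgen μ ∈ Qcode :=
  AddSubgroup.subset_closure ⟨μ, rfl⟩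

lemma T_mem {w : P1 → ZMod 35} (hw : w ∈ Qcode) : T w ∈ Qcode := by
  have hS : S ∈ Qcode := sum_mem fun μ _ => vgen_mem μ
  have hle : Qcode ≤ Qcode.comap T := by
    refine (AddSubgroup.closure_le _).mpr ?_
    rintro _ ⟨μ, rfl⟩
    change T (vgen μ) ∈ Qcode
    by_cases hμ : μ = 0
    · rw [hμ, T_vgen_zero]
      exact add_mem (nsmul_mem hS _) (nsmul_mem (vgen_mem _) _)
    · rcases quadraticChar_dichotomy hμ with h | h
      · rw [T_vgen_of_isSquare h]
        exact add_mem (nsmul_mem (vgen_mem _) _) (nsmul_mem (vgen_mem _) _)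
      · rw [T_vgen_of_not_isSquare h]
        exact sub_mem (add_mem (nsmul_mem hS _) (nsmul_mem (vgen_mem _) _))
          (nsmul_mem (vgen_mem _) _)
  exact hle hw

/-- The composition of the coordinate permutation induced by `ξ` followed by
componentwise multiplication by `x` (i.e. `w ↦ (ν ↦ x_ν · w(ξ⁻¹(ν))) = (ν ↦ x_ν · w(ξ(ν)))`,
since `ξ` is an involution) maps the code `Q` onto itself. -/
theorem stmt_5 :
    (fun w : P1 → ZMod 35 => fun ν : P1 => xComp ν * w (xiPerm ν)) ''
        (Qcode : Set (P1 → ZMod 35)) = (Qcode : Set (P1 → ZMod 35)) := by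
  change T '' (Qcode : Set (P1 → ZMod 35)) = Qcode
  apply Set.Subset.antisymm
  · rintro _ ⟨w, hw, rfl⟩
    exact T_mem hw
  · intro w hw
    -- `T ∘ T = -1` makes `T (-w)` a preimage of `w`.
    exact ⟨T (-w), T_mem (neg_mem hw), by rw [T_T, neg_neg]⟩
end
end

section
/- Every U ∈ GL₂(ℤ) with U·G·Uᵀ = G maps R∨ into R∨ and induces an automorphism of D_R = R∨/R ≅ ℤ/35ℤ. Under the identification of D_R with ℤ/35ℤ via the generator u = (34e₁ + 6e₂)/35, the swap matrix g₁ = [[0,1],[1,0]] induces multiplication by −6 and g₂ = −I₂ induces multiplication by −1; moreover the resulting homomorphism η_R from O(R) = {±I₂, ±g₁} to the group {1, −1, 6, −6} ⊆ (ℤ/35ℤ)ˣ is a group isomorphism (in particular, injective). -/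
/-!
A row `(a, b)` of a matrix `U ∈ O(R)` satisfies `6a² + 2ab + 6b² = 6`, i.e.
`(a + b)² + 5a² + 5b² = 6`, so it is `±e₁` or `±e₂`; the two rows must pair to `1`, which leaves
only `±I₂` and `±g₁` (`mem_ORset_iff`). On the other hand, clearing the denominator `35` turns
"`U` induces multiplication by `k`" into two congruences modulo `35` (`inducesMul_iff`). These
give the multipliers `±1`, `±6` of the four automorphisms, which are distinct modulo `35`, and
multiplicativity is a linear combination of the congruences for the two factors.
-/

open Matrix

noncomputable section

/-- The generator `u = (34 e₁ + 6 e₂)/35` of the discriminant group `D_R = R∨/R ≅ ℤ/35ℤ`. -/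
def uvec : Fin 2 → ℚ := ![34/35, 6/35]

/-- The bilinear form `⟨x,y⟩ = xᵀ G y` on `ℚ²`, with `G = [[6,1],[1,6]]`. -/
def B2 (x y : Fin 2 → ℚ) : ℚ :=
  6 * x 0 * y 0 + x 0 * y 1 + x 1 * y 0 + 6 * x 1 * y 1

/-- Membership in the lattice `R = ℤ² ⊆ ℚ²`. -/
def inRlat (x : Fin 2 → ℚ) : Prop := ∀ i, ∃ k : ℤ, x i = (k : ℚ)

/-- The dual lattice `R∨ = {x ∈ ℚ² : ⟨x,v⟩ ∈ ℤ for all v ∈ R}`. -/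
def Rdual : Set (Fin 2 → ℚ) :=
  {x | ∀ v : Fin 2 → ℤ, ∃ k : ℤ, B2 x (fun i => (v i : ℚ)) = (k : ℚ)}

/-- The Gram matrix `G = [[6,1],[1,6]]` of the lattice `R`. -/
def Gmat : Matrix (Fin 2) (Fin 2) ℤ := !![6, 1; 1, 6]

/-- The swap matrix `g₁ = [[0,1],[1,0]]`. -/
def Smat : Matrix (Fin 2) (Fin 2) ℤ := !![0, 1; 1, 0]

/-- The group `O(R)`: matrices `U ∈ GL₂(ℤ)` with `U·G·Uᵀ = G`, acting on row vectors. -/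
def ORset : Set (Matrix (Fin 2) (Fin 2) ℤ) :=
  {U | IsUnit U.det ∧ U * Gmat * Uᵀ = Gmat}

/-- The action of an integer matrix `U` on `ℚ²` (on row vectors). -/
def actU (U : Matrix (Fin 2) (Fin 2) ℤ) (x : Fin 2 → ℚ) : Fin 2 → ℚ :=
  x ᵥ* (U.map ((↑) : ℤ → ℚ))

/-- `U` induces multiplication by `k` on `D_R = R∨/R ≅ ℤ/35ℤ` (identified via the
generator `u`): `u·U ≡ k·u (mod R)`. -/
def inducesMul (U : Matrix (Fin 2) (Fin 2) ℤ) (k : ℤ) : Prop :=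
  inRlat (actU U uvec - (k : ℚ) • uvec)

/-- `inducesMul` as a pair of congruences modulo `35`, one for each coordinate of
`35 (u·U - k·u)`. -/
lemma inducesMul_iff (U : Matrix (Fin 2) (Fin 2) ℤ) (k : ℤ) :
    inducesMul U k ↔ (35 : ℤ) ∣ 34 * U 0 0 + 6 * U 1 0 - 34 * k ∧
      (35 : ℤ) ∣ 34 * U 0 1 + 6 * U 1 1 - 6 * k := by
  have key : ∀ (q : ℚ) (n : ℤ), q = n / 35 → ((∃ m : ℤ, q = m) ↔ (35 : ℤ) ∣ n) := by
    rintro q n rfl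
    refine exists_congr fun m => ?_
    rw [div_eq_iff (by norm_num), mul_comm]
    exact_mod_cast Iff.rfl
  unfold inducesMul inRlat
  rw [Fin.forall_fin_two]
  refine and_congr (key _ _ ?_) (key _ _ ?_) <;>
  · simp [actU, uvec, vecMul, dotProduct, Fin.sum_univ_two]
    ring

/-- The short vectors of `R`: the form takes the value `6` only at `±e₁` and `±e₂`. -/
lemma short_vectors {a b : ℤ} (h : 6 * a ^ 2 + 2 * a * b + 6 * b ^ 2 = 6) :
    (a = 1 ∧ b = 0) ∨ (a = -1 ∧ b = 0) ∨ (a = 0 ∧ b = 1) ∨ (a = 0 ∧ b = -1) := by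
  have ha : -1 ≤ a ∧ a ≤ 1 := by
    constructor <;> nlinarith [sq_nonneg (a + b), sq_nonneg b]
  have hb : -1 ≤ b ∧ b ≤ 1 := by
    constructor <;> nlinarith [sq_nonneg (a + b), sq_nonneg a]
  obtain ⟨ha₁, ha₂⟩ := ha
  obtain ⟨hb₁, hb₂⟩ := hb
  interval_cases a <;> interval_cases b <;> simp_all

/-- `O(R) = {±I₂, ±g₁}`. -/
lemma mem_ORset_iff (U : Matrix (Fin 2) (Fin 2) ℤ) :
    U ∈ ORset ↔ U = 1 ∨ U = -1 ∨ U = Smat ∨ U = -Smat := by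
  constructor
  · rintro ⟨-, h⟩
    have h00 := congrFun (congrFun h 0) 0
    have h01 := congrFun (congrFun h 0) 1
    have h11 := congrFun (congrFun h 1) 1
    simp [Gmat, mul_apply, Fin.sum_univ_two] at h00 h01 h11
    have r0 := short_vectors (a := U 0 0) (b := U 0 1) (by linarith)
    have r1 := short_vectors (a := U 1 0) (b := U 1 1) (by linarith)
    rcases r0 with ⟨p, q⟩ | ⟨p, q⟩ | ⟨p, q⟩ | ⟨p, q⟩ <;>
    rcases r1 with ⟨r, s⟩ | ⟨r, s⟩ | ⟨r, s⟩ | ⟨r, s⟩ <;>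
    simp [p, q, r, s] at h01 <;>
    simp [← Matrix.ext_iff, Fin.forall_fin_two, Smat, p, q, r, s]
  · rintro (rfl | rfl | rfl | rfl) <;>
    exact ⟨by simp [Smat, det_fin_two], by decide⟩

lemma inducesMul_mul {U V : Matrix (Fin 2) (Fin 2) ℤ} {k l : ℤ} (hU : inducesMul U k)
    (hV : inducesMul V l) : inducesMul (U * V) (k * l) := by
  rw [inducesMul_iff] at *
  obtain ⟨⟨a, ha⟩, b, hb⟩ := hU
  obtain ⟨⟨c, hc⟩, d, hd⟩ := hV
  simp only [mul_apply, Fin.sum_univ_two]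
  -- `uUV - kl u = (uU - k u) V + k (uV - l u)`
  exact ⟨⟨a * V 0 0 + b * V 1 0 + k * c, by linear_combination V 0 0 * ha + V 1 0 * hb + k * hc⟩,
    ⟨a * V 0 1 + b * V 1 1 + k * d, by linear_combination V 0 1 * ha + V 1 1 * hb + k * hd⟩⟩

lemma inducesMul_one : inducesMul 1 1 := by
  rw [inducesMul_iff]; decide

lemma inducesMul_neg_one : inducesMul (-1) (-1) := by
  rw [inducesMul_iff]; decide

lemma inducesMul_Smat : inducesMul Smat (-6) := by
  rw [inducesMul_iff]; decide

lemma inducesMul_neg_Smat : inducesMul (-Smat) 6 := by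
  rw [inducesMul_iff]; decide

lemma actU_mem_Rdual {U : Matrix (Fin 2) (Fin 2) ℤ} (hU : U ∈ ORset) {x : Fin 2 → ℚ}
    (hx : x ∈ Rdual) : actU U x ∈ Rdual := by
  intro v
  -- The four elements of `O(R)` are symmetric involutions, so `⟨xU, v⟩ = ⟨x, Uv⟩`.
  obtain ⟨k, hk⟩ := hx (U *ᵥ v)
  refine ⟨k, hk ▸ ?_⟩
  rw [mem_ORset_iff] at hU
  rcases hU with rfl | rfl | rfl | rfl <;>
  · simp [B2, actU, Smat, vecMul, mulVec, dotProduct, Fin.sum_univ_two]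
    try ring

/-- Every `U ∈ O(R)` maps `R∨` into `R∨` and induces an automorphism of
`D_R = R∨/R ≅ ℤ/35ℤ`; `g₁ = [[0,1],[1,0]]` induces multiplication by `-6` and
`g₂ = -I₂` induces multiplication by `-1`; and the resulting map
`η_R : O(R) → {1, -1, 6, -6} ⊆ (ℤ/35ℤ)ˣ` is a group isomorphism (multiplicative,
injective, and surjective onto `{1, -1, 6, -6}`). -/
theorem stmt_17 :
    (∀ U ∈ ORset, ∀ x ∈ Rdual, actU U x ∈ Rdual) ∧
    inducesMul Smat (-6) ∧
    inducesMul (-1) (-1) ∧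
    (∀ U ∈ ORset, ∃ k : ℤ, inducesMul U k ∧
      ((k : ZMod 35) = 1 ∨ (k : ZMod 35) = -1 ∨
       (k : ZMod 35) = 6 ∨ (k : ZMod 35) = -6)) ∧
    (∀ U ∈ ORset, ∀ U' ∈ ORset, ∀ k k' : ℤ, inducesMul U k → inducesMul U' k' →
      (k : ZMod 35) = (k' : ZMod 35) → U = U') ∧
    (∀ c : ZMod 35, (c = 1 ∨ c = -1 ∨ c = 6 ∨ c = -6) →
      ∃ U ∈ ORset, ∃ k : ℤ, (k : ZMod 35) = c ∧ inducesMul U k) ∧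
    (∀ U ∈ ORset, ∀ U' ∈ ORset, ∀ k k' : ℤ, inducesMul U k → inducesMul U' k' →
      inducesMul (U * U') (k * k')) := by
  refine ⟨fun U hU x hx => actU_mem_Rdual hU hx, inducesMul_Smat, inducesMul_neg_one,
    ?_, ?_, ?_, fun U _ U' _ k k' h h' => inducesMul_mul h h'⟩
  · intro U hU
    rcases (mem_ORset_iff U).1 hU with rfl | rfl | rfl | rfl
    · exact ⟨1, inducesMul_one, by simp⟩
    · exact ⟨-1, inducesMul_neg_one, by simp⟩
    · exact ⟨-6, inducesMul_Smat, by simp⟩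
    · exact ⟨6, inducesMul_neg_Smat, by simp⟩
  · intro U hU U' hU' k k' h h' e
    have e' : (35 : ℤ) ∣ k' - k := by
      exact_mod_cast (ZMod.intCast_eq_intCast_iff_dvd_sub k k' 35).1 e
    rw [inducesMul_iff] at h h'
    rw [mem_ORset_iff] at hU' hU
    -- The first-coordinate congruence determines the multiplier, as `34` is a unit modulo `35`;
    -- distinct elements get distinct multipliers.
    obtain ⟨h, -⟩ := h
    obtain ⟨h', -⟩ := h'
    rcases hU with rfl | rfl | rfl | rfl <;> rcases hU' with rfl | rfl | rfl | rfl <;>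
      first
      | rfl
      | (exfalso
         simp [Smat] at h h'
         omega)
  · rintro c (rfl | rfl | rfl | rfl)
    · exact ⟨1, by simp [mem_ORset_iff], 1, by simp, inducesMul_one⟩
    · exact ⟨-1, by simp [mem_ORset_iff], -1, by simp, inducesMul_neg_one⟩
    · exact ⟨-Smat, by simp [mem_ORset_iff], 6, by simp, inducesMul_neg_Smat⟩
    · exact ⟨Smat, by simp [mem_ORset_iff], -6, by simp, inducesMul_Smat⟩
end
end
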